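/- Assume m u∞² > γRT∞, and let g : [f(c∞), ∞) → (0, c∞] be the inverse of the restriction of f to (0, c∞]. Then g(0) = 1, g is differentiable at 0 with g'(0) = 1/(γRT∞ − m u∞²), and consequently the function η ↦ g(η) − e^{−η} is differentiable at 0 with derivative 1 + 1/(γRT∞ − m u∞²); this derivative is strictly positive if and only if m u∞² > γRT∞ + 1 (the nondegenerate Bohm criterion). -/

import Mathlib

open Real Set Filter

/-!
The Sagdeev function is `f n = a · (n^(γ-1) - 1)/(γ-1) - b · (n^(-2) - 1)/(-2)` with `a = γRT∞` and
`b = m u∞²`. As `(n^p - 1)/p` has derivative `n^(p-1)`, this gives `f' 1 = a - b`, so the inverse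
function theorem applies at `1` as soon as `a ≠ b`. In the supersonic case `a < b` the point `1` is
interior to `(0, c∞]`, so the inverse branch `g` is a left inverse of `f` near `1`.
-/

open scoped Topology

theorem one_add_one_div_pos_iff {K : Type*} [Field K] [LinearOrder K] [IsStrictOrderedRing K]
    {d : K} (hd : d ≠ 0) : 0 < 1 + 1 / d ↔ d < -1 ∨ 0 < d := by
  rcases hd.lt_or_gt with hneg | hpos
  · calc 0 < 1 + 1 / d ↔ -1 < 1 / d := neg_lt_iff_pos_add'.symm
      _ ↔ d < 1 / -1 := lt_one_div_of_neg neg_one_lt_zero hneg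
      _ ↔ d < -1 ∨ 0 < d := by simp [hneg.not_gt]
  · exact iff_of_true (by positivity) (.inr hpos)

theorem hasStrictDerivAt_rpow_sub_one_div {p x : ℝ} (hp : p ≠ 0) (hx : x ≠ 0) :
    HasStrictDerivAt (fun y : ℝ => (y ^ p - 1) / p) (x ^ (p - 1)) x := by
  simpa only [mul_div_cancel_left₀ _ hp] using
    HasStrictDerivAt.div_const ((hasStrictDerivAt_rpow_const_of_ne hx p).sub_const 1) p

theorem hasDerivAt_sub_exp_neg {g : ℝ → ℝ} {g' x : ℝ} (hg : HasDerivAt g g' x) :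
    HasDerivAt (fun η => g η - exp (-η)) (g' + exp (-x)) x :=
  (hg.sub (hasDerivAt_neg x).exp).congr_deriv (by ring)

/-- The Sagdeev function with adiabatic exponent `γ`, in terms of the two coefficients `a = γRT∞`
and `b = m u∞²` through which the physical constants enter. It is meaningful only for `γ ≠ 1`. -/
noncomputable def sagdeev (γ a b n : ℝ) : ℝ :=
  (a / (γ - 1)) * (n ^ (γ - 1) - 1) + (b / 2) * (n ^ (-2 : ℝ) - 1)

section

variable {γ a b : ℝ}

theorem sagdeev_one : sagdeev γ a b 1 = 0 := by
  simp [sagdeev]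

theorem hasStrictDerivAt_sagdeev (hγ : γ ≠ 1) {n : ℝ} (hn : n ≠ 0) :
    HasStrictDerivAt (sagdeev γ a b) (a * n ^ (γ - 2) - b * n ^ (-3 : ℝ)) n := by
  have h_thermal := HasStrictDerivAt.const_mul a
    (hasStrictDerivAt_rpow_sub_one_div (sub_ne_zero.2 hγ) hn)
  have h_kinetic := HasStrictDerivAt.const_mul b
    (hasStrictDerivAt_rpow_sub_one_div (p := -2) (by norm_num) hn)
  have h_eq : sagdeev γ a b =
      fun y => a * ((y ^ (γ - 1) - 1) / (γ - 1)) - b * ((y ^ (-2 : ℝ) - 1) / -2) := by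
    funext y
    unfold sagdeev
    ring
  rw [h_eq]
  refine HasStrictDerivAt.congr_deriv (h_thermal.sub h_kinetic) ?_
  norm_num [sub_sub]

theorem hasStrictDerivAt_sagdeev_one (hγ : γ ≠ 1) : HasStrictDerivAt (sagdeev γ a b) (a - b) 1 := by
  simpa using hasStrictDerivAt_sagdeev (a := a) (b := b) hγ one_ne_zero

theorem hasDerivAt_leftInverse_sagdeev (hγ : γ ≠ 1) (hab : a ≠ b) {g : ℝ → ℝ}
    (hg : ∀ᶠ n in 𝓝 1, g (sagdeev γ a b n) = n) : HasDerivAt g (1 / (a - b)) 0 := by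
  simpa only [sagdeev_one, one_div] using
    ((hasStrictDerivAt_sagdeev_one hγ).to_local_left_inverse (sub_ne_zero.2 hab) hg).hasDerivAt

end

theorem sagdeev_inverse_derivative_general {γ a b : ℝ} (hγ : γ ≠ 1) (hab : a ≠ b) {g : ℝ → ℝ}
    (hg : ∀ᶠ n in 𝓝 1, g (sagdeev γ a b n) = n) :
    g 0 = 1 ∧
    HasDerivAt g (1 / (a - b)) 0 ∧
    HasDerivAt (fun η => g η - exp (-η)) (1 + 1 / (a - b)) 0 ∧
    (0 < 1 + 1 / (a - b) ↔ a + 1 < b ∨ b < a) := by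
  have hg_deriv := hasDerivAt_leftInverse_sagdeev hγ hab hg
  refine ⟨?_, hg_deriv, ?_, ?_⟩
  · simpa only [sagdeev_one] using hg.self_of_nhds
  · simpa [add_comm] using hasDerivAt_sub_exp_neg hg_deriv
  · rw [one_add_one_div_pos_iff (sub_ne_zero.2 hab), sub_pos, sub_lt_iff_lt_add,
      neg_add_eq_sub, lt_sub_iff_add_lt]

/-- Assume `m u∞² > γRT∞` and let `g` be the inverse of the restriction of the Sagdeev
function `f` to `(0, c∞]` (a bijection onto `[f(c∞), ∞)`).  Then `g(0) = 1`, `g` is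
differentiable at `0` with `g'(0) = 1/(γRT∞ − m u∞²)`, the function
`η ↦ g(η) − e^{−η}` is differentiable at `0` with derivative `1 + 1/(γRT∞ − m u∞²)`,
and this derivative is strictly positive iff `m u∞² > γRT∞ + 1`. -/
theorem sagdeev_inverse_derivative
    (γ R Tinf m uinf : ℝ) (hγ : 1 < γ) (hR : 0 < R) (hT : 0 < Tinf) (hm : 0 < m)
    (hu : uinf < 0)
    (f : ℝ → ℝ)
    (hf : ∀ n : ℝ, f n =
      (γ * R * Tinf / (γ - 1)) * (n ^ (γ - 1) - 1)
        + (m * uinf ^ 2 / 2) * (n ^ (-2 : ℝ) - 1))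
    (cinf : ℝ) (hc : cinf = (m * uinf ^ 2 / (γ * R * Tinf)) ^ ((1 : ℝ) / (γ + 1)))
    (hsup : γ * R * Tinf < m * uinf ^ 2)
    (g : ℝ → ℝ)
    (hg₁ : ∀ n ∈ Ioc (0 : ℝ) cinf, g (f n) = n)
    (hg₂ : ∀ y ∈ Ici (f cinf), f (g y) = y)
    (hg₃ : MapsTo g (Ici (f cinf)) (Ioc 0 cinf)) :
    g 0 = 1 ∧
    HasDerivAt g (1 / (γ * R * Tinf - m * uinf ^ 2)) 0 ∧
    HasDerivAt (fun η => g η - Real.exp (-η))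
      (1 + 1 / (γ * R * Tinf - m * uinf ^ 2)) 0 ∧
    (0 < 1 + 1 / (γ * R * Tinf - m * uinf ^ 2) ↔ γ * R * Tinf + 1 < m * uinf ^ 2) := by
  obtain rfl : f = sagdeev γ (γ * R * Tinf) (m * uinf ^ 2) := funext hf
  have hcinf : 1 < cinf :=
    hc ▸ one_lt_rpow ((one_lt_div (by positivity)).2 hsup) (by positivity)
  have hg_near_one : ∀ᶠ n in 𝓝 1, g (sagdeev γ (γ * R * Tinf) (m * uinf ^ 2) n) = n :=
    mem_of_superset (Ioc_mem_nhds one_pos hcinf) hg₁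
  simpa only [hsup.not_gt, or_false] using
    sagdeev_inverse_derivative_general hγ.ne' hsup.ne hg_near_one
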